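/- arXiv:2310.14302 — 7 statements merged into one kernel-verified Lean document; each statement's English description precedes it below -/
import Mathlib

section
/- For every natural number n, the type-A generalized Catalan number product formula evaluates to a Catalan number: ∏_{i=1}^{n} (i + (n+1) + 1)/(i + 1) = (1/(n+2))·C(2n+2, n+1), as an identity of rational numbers. -/
open Finset

theorem typeA_aux (n m : ℕ) :
    ∏ i ∈ Finset.Icc 1 m, (((i : ℚ) + (n + 1) + 1) / (i + 1)) =
      (1 / ((n : ℚ) + 2)) * ((m + n + 2).choose (m + 1)) := by
  induction m with
  | zero =>
    have h : (n : ℚ) + 2 ≠ 0 := by positivity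
    simp [h]
  | succ m ih =>
    rw [Finset.prod_Icc_succ_top (by omega), ih]
    have h := Nat.add_one_mul_choose_eq (m + n + 2) (m + 1)
    have e : m + 1 + n + 2 = m + n + 2 + 1 := by ring
    rw [e]
    have hq : ((m : ℚ) + n + 2 + 1) * ((m + n + 2).choose (m + 1) : ℚ) =
        ((m + n + 2 + 1).choose (m + 1 + 1) : ℚ) * (m + 1 + 1) := by exact_mod_cast h
    have h1 : (n : ℚ) + 2 ≠ 0 := by positivity
    have h2 : (m : ℚ) + 1 + 1 ≠ 0 := by positivity
    rw [← div_eq_iff h2] at hq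
    rw [← hq]
    push_cast
    ring

theorem typeA_catalan_product (n : ℕ) :
    ∏ i ∈ Finset.Icc 1 n, (((i : ℚ) + (n + 1) + 1) / (i + 1)) =
      (1 / ((n : ℚ) + 2)) * ((2 * n + 2).choose (n + 1)) := by
  rw [typeA_aux, two_mul]
end

section
/- For every natural number n, the type-B generalized Catalan number product formula evaluates to a central binomial coefficient: ∏_{i=1}^{n} ((2i−1) + 2n + 1)/((2i−1) + 1) = C(2n, n), as an identity of rational numbers. -/
open Finset

theorem typeB_aux (n k : ℕ) :
    ∏ i ∈ Finset.Icc 1 k, (((2 * (i : ℚ) - 1) + 2 * n + 1) / ((2 * (i : ℚ) - 1) + 1)) =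
      ((n + k).choose k : ℚ) := by
  induction k with
  | zero => simp
  | succ k ih =>
    rw [Finset.prod_Icc_succ_top (by omega), ih]
    have h : ((n + k + 1 : ℕ) : ℚ) * ((n + k).choose k : ℚ) =
        ((n + k + 1).choose (k + 1) : ℚ) * ((k + 1 : ℕ) : ℚ) := by
      exact_mod_cast Nat.add_one_mul_choose_eq (n + k) k
    have hk : (2 * ((k + 1 : ℕ) : ℚ) - 1) + 1 ≠ 0 := by
      push_cast
      ring_nf
      positivity
    rw [← mul_div_assoc, div_eq_iff hk, ← add_assoc]
    push_cast at h ⊢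
    linear_combination 2 * h

theorem typeB_catalan_product (n : ℕ) :
    ∏ i ∈ Finset.Icc 1 n, (((2 * (i : ℚ) - 1) + 2 * n + 1) / ((2 * (i : ℚ) - 1) + 1)) =
      ((2 * n).choose n : ℚ) := by
  rw [typeB_aux n n, two_mul]
end

section
/- Let d ≥ 2 and n, k be natural numbers. Then ∏_{i=0}^{d−1} C(k+(n+1)+i, n+1) / C((n+1)+i, n+1) = ∑_{i=0}^{k} N_A(d,n,i) · C(d(n+1)+k−i, d(n+1)), as an identity of rational numbers, where N_A(d,n,i) := N_{d,n+1,i} and N_{d,m,j} := ∑_{l=0}^{j} (−1)^{j−l} · C(dm+1, j−l) · ∏_{s=0}^{d−1} C(m+s+l, m) / C(m+s, m). -/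
open Finset

/-- The `d`-dimensional Narayana numbers `N_{d,m,j}`. -/
noncomputable def narayanaHD (d m j : ℕ) : ℚ :=
  ∑ l ∈ Finset.range (j + 1),
    (-1 : ℚ) ^ (j - l) * ((d * m + 1).choose (j - l)) *
      ∏ s ∈ Finset.range d, ((m + s + l).choose m : ℚ) / ((m + s).choose m)

/-- The type-A `d`-dimensional Narayana numbers `N_A(d,n,k) = N_{d,n+1,k}`. -/
noncomputable def narayanaA (d n k : ℕ) : ℚ := narayanaHD d (n + 1) k

theorem coeff_aux (D : ℕ) : ((1 - PowerSeries.X : PowerSeries ℚ) ^ D) =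
    PowerSeries.mk fun j => (-1 : ℚ) ^ j * (D.choose j : ℚ) := by
  induction D with
  | zero =>
    ext j
    cases j <;> simp [PowerSeries.coeff_one]
  | succ D ih =>
    rw [pow_succ, ih]
    ext j
    rw [mul_sub, mul_one, map_sub]
    cases j with
    | zero => simp
    | succ j =>
      rw [PowerSeries.coeff_succ_mul_X]
      simp only [PowerSeries.coeff_mk, Nat.choose_succ_succ]
      push_cast
      ring

theorem inversion_aux (M k : ℕ) (f g : ℕ → ℚ)
    (hg : ∀ j, g j = ∑ l ∈ Finset.range (j + 1),
      (-1 : ℚ) ^ (j - l) * ((M + 1).choose (j - l)) * f l) :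
    f k = ∑ i ∈ Finset.range (k + 1), g i * ((M + (k - i)).choose M : ℚ) := by
  have h1 : PowerSeries.mk g = PowerSeries.mk f * (1 - PowerSeries.X : PowerSeries ℚ) ^ (M + 1) := by
    rw [coeff_aux]
    ext j
    rw [PowerSeries.coeff_mul, Finset.Nat.sum_antidiagonal_eq_sum_range_succ_mk]
    simp only [PowerSeries.coeff_mk, hg]
    exact Finset.sum_congr rfl fun l _ => by ring
  have h2 : PowerSeries.mk f = PowerSeries.mk g *
      PowerSeries.mk (fun n => ((M + n).choose M : ℚ)) := by
    rw [h1, mul_assoc, mul_comm ((1 - PowerSeries.X : PowerSeries ℚ) ^ (M + 1)),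
      PowerSeries.mk_add_choose_mul_one_sub_pow_eq_one, mul_one]
  have h3 := congrArg (PowerSeries.coeff k) h2
  rw [PowerSeries.coeff_mul, Finset.Nat.sum_antidiagonal_eq_sum_range_succ_mk] at h3
  simpa only [PowerSeries.coeff_mk] using h3

theorem sulanke_identity (d n k : ℕ) (hd : 2 ≤ d) :
    ∏ i ∈ Finset.range d,
        ((k + (n + 1) + i).choose (n + 1) : ℚ) / (((n + 1) + i).choose (n + 1)) =
      ∑ i ∈ Finset.range (k + 1),
        narayanaA d n i * ((d * (n + 1) + (k - i)).choose (d * (n + 1)) : ℚ) := by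
  have h := inversion_aux (d * (n + 1)) k
    (fun l => ∏ s ∈ Finset.range d,
      ((n + 1 + s + l).choose (n + 1) : ℚ) / ((n + 1 + s).choose (n + 1)))
    (narayanaA d n) (fun j => rfl)
  rw [← h]
  refine Finset.prod_congr rfl fun i _ => ?_
  rw [show k + (n + 1) + i = n + 1 + i + k by ring]
end

section
/- (Li Shan-lan's identity) For all natural numbers m and n, C(m+n, n)^2 = ∑_{i=0}^{m} C(n, i)^2 · C(2n + (m−i), 2n), where C(a,b) denotes the binomial coefficient. (Since C(n,i) = 0 for i > n, the upper limit of summation may equivalently be taken to be any integer between min(m,n) and m.) -/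
open Finset

/-- Telescoping certificate for the recurrence in `m`. -/
lemma li_step (n i k : ℕ) :
    ((i + k + 1 : ℕ) : ℤ) ^ 2 * ((n.choose i : ℤ) ^ 2 * ((2 * n + (k + 1)).choose (2 * n) : ℤ))
      - ((i + k + n + 1 : ℕ) : ℤ) ^ 2 * ((n.choose i : ℤ) ^ 2 * ((2 * n + k).choose (2 * n) : ℤ))
    = (i : ℤ) ^ 2 * ((n.choose i : ℤ) ^ 2 * ((2 * n + (k + 1)).choose (2 * n) : ℤ))
      - ((i + 1 : ℕ) : ℤ) ^ 2 *
        ((n.choose (i + 1) : ℤ) ^ 2 * ((2 * n + k).choose (2 * n) : ℤ)) := by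
  have h1 : (n.choose (i + 1) : ℤ) * (i + 1) = n.choose i * ((n : ℤ) - i) := by
    have h := Nat.choose_succ_right_eq n i
    rcases le_or_gt i n with hi | hi
    · zify [hi] at h
      exact h
    · simp [Nat.choose_eq_zero_of_lt hi, Nat.choose_eq_zero_of_lt (Nat.lt_succ_of_lt hi)]
  have h2 : ((2 * n + (k + 1)).choose (2 * n) : ℤ) * (k + 1)
      = (2 * n + k).choose (2 * n) * (2 * n + k + 1) := by
    have h := Nat.choose_mul_succ_eq (2 * n + k) (2 * n)
    have e : 2 * n + k + 1 - 2 * n = k + 1 := by omega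
    rw [e] at h
    zify at h
    rw [← add_assoc]
    linarith
  generalize ((2 * n + (k + 1)).choose (2 * n) : ℤ) = A at *
  generalize ((2 * n + k).choose (2 * n) : ℤ) = B at *
  generalize (n.choose (i + 1) : ℤ) = d at *
  generalize (n.choose i : ℤ) = c at *
  push_cast
  have h3 : (d * (i + 1)) ^ 2 = (c * ((n : ℤ) - i)) ^ 2 := by rw [h1]
  linear_combination (c ^ 2 * (2 * i + k + 1)) * h2 + B * h3

theorem li_shanlan_identity (m n : ℕ) :
    ((m + n).choose n) ^ 2 =
      ∑ i ∈ Finset.range (m + 1), (n.choose i) ^ 2 * (2 * n + (m - i)).choose (2 * n) := by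
  induction m with
  | zero => simp
  | succ m ih =>
    zify at ih ⊢
    have key : ∑ i ∈ Finset.range (m + 1),
        (((m + 1 : ℕ) : ℤ) ^ 2 *
            ((n.choose i : ℤ) ^ 2 * ((2 * n + (m + 1 - i)).choose (2 * n) : ℤ))
          - ((m + n + 1 : ℕ) : ℤ) ^ 2 *
            ((n.choose i : ℤ) ^ 2 * ((2 * n + (m - i)).choose (2 * n) : ℤ)))
        = ∑ i ∈ Finset.range (m + 1),
          ((i : ℤ) ^ 2 * ((n.choose i : ℤ) ^ 2 * ((2 * n + (m + 1 - i)).choose (2 * n) : ℤ))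
          - ((i + 1 : ℕ) : ℤ) ^ 2 * ((n.choose (i + 1) : ℤ) ^ 2 *
              ((2 * n + (m + 1 - (i + 1))).choose (2 * n) : ℤ))) := by
      refine Finset.sum_congr rfl fun i hi => ?_
      obtain ⟨k, rfl⟩ := Nat.exists_eq_add_of_le (Nat.lt_succ_iff.mp (Finset.mem_range.mp hi))
      have e1 : i + k + 1 - i = k + 1 := by omega
      have e2 : i + k - i = k := by omega
      have e3 : i + k + 1 - (i + 1) = k := by omega
      rw [e1, e2, e3]
      exact li_step n i k
    rw [Finset.sum_range_sub' (fun i : ℕ => (i : ℤ) ^ 2 *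
      ((n.choose i : ℤ) ^ 2 * ((2 * n + (m + 1 - i)).choose (2 * n) : ℤ))),
      Finset.sum_sub_distrib, ← Finset.mul_sum, ← Finset.mul_sum, ← ih] at key
    rw [Finset.sum_range_succ]
    have h : ((m + 1 + n).choose n : ℤ) * (m + 1) = (m + n).choose n * (m + n + 1) := by
      have h := Nat.choose_mul_succ_eq (m + n) n
      have e : m + n + 1 - n = m + 1 := by omega
      have e' : m + n + 1 = m + 1 + n := by omega
      rw [e, e'] at h
      zify at h
      linarith
    have hm : ((m : ℤ) + 1) ^ 2 ≠ 0 := by positivity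
    apply mul_left_cancel₀ hm
    push_cast at key
    rw [Nat.sub_self] at key ⊢
    have h3 : (((m + 1 + n).choose n : ℤ) * (m + 1)) ^ 2
      = ((m + n).choose n * (m + n + 1)) ^ 2 := by rw [h]
    linear_combination h3 - key
end

section
/- For every natural number n, the polynomial identity ∑_{k=0}^{n} C(n, k) · C(n+k, n) · (x−1)^{n−k} = ∑_{i=0}^{n} C(n, i)^2 · x^i holds in the polynomial ring ℤ[x]. (This is the Hurwitz formula (1−x)^n P_n((1+x)/(1−x)) = ∑_i C(n,i)^2 x^i combined with the explicit expansion of the Legendre polynomial P_n.) -/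
open Finset Polynomial

theorem hl_term (n k i : ℕ) (hk : k ≤ n) (hi : i ≤ n) :
    n.choose i * i.choose (n - k) = n.choose k * k.choose (n - i) := by
  by_cases h : n - k ≤ i
  · rw [Nat.choose_mul h, Nat.choose_symm hk, Nat.sub_sub_self hk]
    congr 1
    rw [← Nat.choose_symm (show n - i ≤ k by omega)]
    congr 1
    omega
  · rw [Nat.choose_eq_zero_of_lt (show i < n - k by omega),
      Nat.choose_eq_zero_of_lt (show k < n - i by omega)]
    simp

theorem hl_sum (n k : ℕ) (hk : k ≤ n) :
    ∑ i ∈ Finset.range (n + 1), n.choose i ^ 2 * i.choose (n - k) =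
      n.choose k * (n + k).choose n := by
  rw [Nat.add_choose_eq, Finset.Nat.sum_antidiagonal_eq_sum_range_succ_mk, Finset.mul_sum]
  refine Finset.sum_congr rfl fun i hi => ?_
  have hi' : i ≤ n := by simpa [Nat.lt_succ_iff] using hi
  have := hl_term n k i hk hi'
  rw [pow_two, mul_assoc, this]
  ring

theorem hurwitz_legendre_identity (n : ℕ) :
    ∑ k ∈ Finset.range (n + 1),
        Polynomial.C ((n.choose k : ℤ) * ((n + k).choose n)) * (Polynomial.X - 1) ^ (n - k) =
      ∑ i ∈ Finset.range (n + 1),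
        Polynomial.C ((n.choose i : ℤ) ^ 2) * Polynomial.X ^ i := by
  have hX : ∀ i ∈ Finset.range (n + 1), (X : ℤ[X]) ^ i =
      ∑ k ∈ Finset.range (n + 1), (X - 1) ^ (n - k) * ((i.choose (n - k) : ℕ) : ℤ[X]) := by
    intro i hi
    have hi' : i + 1 ≤ n + 1 := by simpa using hi
    have h1 := Finset.sum_range_reflect
      (fun m => ((X : ℤ[X]) - 1) ^ m * ((i.choose m : ℕ) : ℤ[X])) (n + 1)
    simp only [Nat.add_sub_cancel] at h1
    rw [h1]
    have h2 := add_pow ((X : ℤ[X]) - 1) 1 i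
    simp only [sub_add_cancel, one_pow, mul_one] at h2
    rw [h2]
    refine Finset.sum_subset (Finset.range_mono hi') fun m _ hm => ?_
    rw [Nat.choose_eq_zero_of_lt (by simpa using hm)]
    simp
  symm
  refine (Finset.sum_congr rfl fun i hi => by rw [hX i hi, Finset.mul_sum]).trans ?_
  rw [Finset.sum_comm]
  refine Finset.sum_congr rfl fun k hk => ?_
  have hk' : k ≤ n := by simpa [Nat.lt_succ_iff] using hk
  have h := congrArg (Nat.cast : ℕ → ℤ[X]) (hl_sum n k hk')
  push_cast at h
  simp only [map_mul, map_pow, map_natCast]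
  rw [← h, Finset.sum_mul]
  refine Finset.sum_congr rfl fun i _ => ?_
  ring
end

section
/- For all natural numbers n ≥ 1 and k, one has C(k+n, n)^2 − C(k+n−1, n)^2 = ∑_{i=0}^{min(n,k)} C(n, i)^2 · C((k−i) + 2n − 1, 2n − 1), where C(a,b) denotes the binomial coefficient. (The left-hand side equals the dimension of the irreducible sl_{n+1}(ℂ)-representation with highest weight k·θ, θ the highest root.) -/
open Finset

lemma vand_sym (n y : ℕ) :
    ∑ m ∈ range (n + 1), n.choose m * y.choose m = (n + y).choose n := by
  rw [add_comm n y, Nat.add_choose_eq, Finset.Nat.sum_antidiagonal_eq_sum_range_succ_mk]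
  refine Finset.sum_congr rfl fun m hm => ?_
  have : m ≤ n := by simp at hm; omega
  simp only [Nat.choose_symm this]
  ring

lemma vand_shift (n x i : ℕ) :
    ((n - i) + x).choose (2 * n) =
      ∑ m ∈ range (n + 1), (n - i).choose (n - m) * x.choose (n + m) := by
  rw [Nat.add_choose_eq, Finset.Nat.sum_antidiagonal_eq_sum_range_succ_mk,
    ← Finset.sum_range_reflect (fun m => (n - i).choose (n - m) * x.choose (n + m))]
  symm
  apply Finset.sum_subset_zero_on_sdiff
  · intro a; simp; omega
  · intro a ha
    simp at ha
    simp only [Nat.choose_eq_zero_of_lt (show n - i < a by omega), zero_mul]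
  · intro a ha
    simp at ha
    dsimp only
    congr 2 <;> omega

lemma li_shanlan (n k : ℕ) :
    ((k + n).choose n) ^ 2 =
      ∑ i ∈ range (n + 1), (n.choose i) ^ 2 * (k + 2 * n - i).choose (2 * n) := by
  have h1 : ∀ i ∈ range (n + 1), (n.choose i) ^ 2 * (k + 2 * n - i).choose (2 * n) =
      ∑ m ∈ range (n + 1),
        n.choose i * m.choose i * (n.choose m * (k + n).choose (n + m)) := by
    intro i hi
    simp at hi
    rw [show k + 2 * n - i = (n - i) + (k + n) by omega, vand_shift, Finset.mul_sum]
    refine Finset.sum_congr rfl fun m hm => ?_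
    simp at hm
    have key : n.choose i * (n - i).choose (n - m) = n.choose m * m.choose i := by
      rcases le_or_gt i m with him | him
      · rw [Nat.choose_mul him,
          ← Nat.choose_symm (show n - m ≤ n - i by omega)]
        congr 2
        omega
      · rw [Nat.choose_eq_zero_of_lt him, Nat.choose_eq_zero_of_lt (show n - i < n - m by omega), mul_zero, mul_zero]
    calc _ = n.choose i * (n.choose i * (n - i).choose (n - m)) * (k + n).choose (n + m) := by ring
      _ = _ := by rw [key]; ring
  rw [Finset.sum_congr rfl h1, Finset.sum_comm]
  have h2 : ∀ m ∈ range (n + 1), ∑ i ∈ range (n + 1),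
      n.choose i * m.choose i * (n.choose m * (k + n).choose (n + m)) =
      (k + n).choose n * (n.choose m * k.choose m) := by
    intro m hm
    rw [← Finset.sum_mul, vand_sym]
    rcases le_or_gt m k with h | h
    · have := Nat.choose_mul (n := k + n) (k := n + m) (s := n) (by omega)
      simp only [Nat.add_sub_cancel, Nat.add_sub_cancel_left] at this
      linear_combination n.choose m * this
    · rw [Nat.choose_eq_zero_of_lt h, Nat.choose_eq_zero_of_lt (show k + n < n + m by omega)]
      simp
  rw [Finset.sum_congr rfl h2, ← Finset.mul_sum, vand_sym, add_comm n k, sq]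

theorem dim_VkTheta_eq_sum (n k : ℕ) (hn : 1 ≤ n) :
    (((k + n).choose n : ℤ) ^ 2 - ((k + n - 1).choose n : ℤ) ^ 2) =
      ∑ i ∈ Finset.range (min n k + 1),
        ((n.choose i : ℤ)) ^ 2 * (((k - i) + 2 * n - 1).choose (2 * n - 1) : ℤ) := by
  rcases k with _ | k
  · simp [Nat.choose_eq_zero_of_lt (show n - 1 < n by omega)]
  · have a := congrArg (Nat.cast (R := ℤ)) (li_shanlan n (k + 1))
    have b := congrArg (Nat.cast (R := ℤ)) (li_shanlan n k)
    push_cast at a b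
    rw [show k + 1 + n - 1 = k + n by omega, a, b, ← Finset.sum_sub_distrib]
    symm
    apply Finset.sum_subset_zero_on_sdiff
    · intro i; simp; omega
    · intro i hi
      simp at hi
      rw [Nat.choose_eq_zero_of_lt (show k + 1 + 2 * n - i < 2 * n by omega),
        Nat.choose_eq_zero_of_lt (show k + 2 * n - i < 2 * n by omega)]
      simp
    · intro i hi
      simp at hi
      have p := Nat.choose_succ_succ (k + 2 * n - i) (2 * n - 1)
      rw [show (2 * n - 1).succ = 2 * n by omega,
        show (k + 2 * n - i).succ = k + 1 + 2 * n - i by omega] at p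
      rw [show k + 1 - i + 2 * n - 1 = k + 2 * n - i by omega, p]
      push_cast
      ring
end

section
/- For every natural number n and every real number x with |x| < 1, one has −(1/n!) · (d^n/dz^n)(z^n/(z+x)^{n+1}) evaluated at z = −1 equals ∑_{k=0}^{∞} C(n+k, k)^2 · x^k; that is, the n-th iterated derivative at −1 of the real function z ↦ z^n/(z+x)^{n+1}, multiplied by −1/n!, equals the (convergent) sum of the series ∑_{k≥0} C(n+k,k)^2 x^k. -/
theorem turan_aux_prod (j n : ℕ) :
    (∏ i ∈ Finset.range n, (((-((j : ℤ) + 1) : ℤ) : ℝ) - i)) * (j.factorial : ℝ) =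
      (-1) ^ n * ((n + j).factorial : ℝ) := by
  induction n with
  | zero => simp
  | succ n ih =>
    rw [Finset.prod_range_succ, show n + 1 + j = (n + j) + 1 by ring, Nat.factorial_succ]
    push_cast at ih ⊢
    rw [mul_right_comm, ih]
    ring

theorem turan_aux_fun (n : ℕ) (x : ℝ) :
    (fun z : ℝ => z ^ n / (z + x) ^ (n + 1)) =
      fun z : ℝ => ∑ j ∈ Finset.range (n + 1),
        ((-x) ^ j * (n.choose j : ℝ)) * (z + x) ^ (-((j : ℤ) + 1)) := by
  funext z
  have hz (j : ℕ) : (z + x) ^ (-((j : ℤ) + 1)) = ((z + x) ^ (j + 1))⁻¹ := by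
    rw [zpow_neg]; norm_cast
  simp only [hz]
  by_cases h : z + x = 0
  · simp [h]
  · have e : z ^ n = ((-x) + (z + x)) ^ n := by ring
    rw [e, add_pow, Finset.sum_div]
    refine Finset.sum_congr rfl fun j hj => ?_
    have hj' : j ≤ n := by simpa [Nat.lt_succ_iff] using hj
    obtain ⟨m, rfl⟩ := Nat.exists_eq_add_of_le hj'
    rw [Nat.add_sub_cancel_left]
    field_simp
    ring

theorem turan_aux_deriv (n j : ℕ) (x : ℝ) (hx : |x| < 1) :
    iteratedDeriv n (fun z : ℝ => (z + x) ^ (-((j : ℤ) + 1))) (-1) =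
      (-1) ^ (j + 1) * (n.factorial : ℝ) * ((n + j).choose n : ℝ) / (1 - x) ^ (n + j + 1) := by
  have h1 : 1 - x ≠ 0 := by linarith [(abs_lt.1 hx).2]
  rw [iteratedDeriv_comp_add_const n (fun y : ℝ => y ^ (-((j : ℤ) + 1))) x]
  simp only [iteratedDeriv_eq_iterate, iter_deriv_zpow]
  have hz : (-1 + x) ^ (-((j : ℤ) + 1) - n) = (-1) ^ (n + j + 1) / (1 - x) ^ (n + j + 1) := by
    rw [show -((j : ℤ) + 1) - n = -((n + j + 1 : ℕ) : ℤ) by push_cast; ring, zpow_neg,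
      zpow_natCast, show -1 + x = (-1) * (1 - x) by ring, mul_pow, mul_inv, ← inv_pow]
    norm_num [div_eq_mul_inv]
  have hp := turan_aux_prod j n
  have hj : (j.factorial : ℝ) ≠ 0 := by exact_mod_cast j.factorial_ne_zero
  have hn : (n.factorial : ℝ) ≠ 0 := by exact_mod_cast n.factorial_ne_zero
  have hs : ((-1 : ℝ) ^ n) * (-1) ^ n = 1 := by rw [← mul_pow]; simp
  rw [hz, eq_div_of_mul_eq hj hp, Nat.cast_add_choose]
  field_simp
  rw [show n + j + 1 = n + (j + 1) by ring, pow_add, ← mul_assoc, hs, one_mul]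

theorem turan_aux_choose (n k : ℕ) :
    ∑ j ∈ Finset.range (n + 1), n.choose j * (n + j).choose n * (k + n).choose (n + j) =
      (n + k).choose k ^ 2 := by
  have h (j : ℕ) : (n + j).choose n * (k + n).choose (n + j) =
      (n + k).choose k * k.choose j := by
    rw [mul_comm, Nat.choose_mul (Nat.le_add_right n j)]
    rw [Nat.add_sub_cancel, Nat.add_sub_cancel_left, add_comm k n, Nat.choose_symm_add]
  simp only [mul_assoc, h]
  have hv := Nat.add_choose_eq k n n
  rw [Finset.Nat.sum_antidiagonal_eq_sum_range_succ (fun i j => k.choose i * n.choose j)] at hv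
  have hc : (n + k).choose k = (k + n).choose n := by
    rw [add_comm k n, Nat.choose_symm_add]
  rw [sq, hc]
  have hm : (k + n).choose n * (k + n).choose n = (k + n).choose n *
      ∑ i ∈ Finset.range n.succ, k.choose i * n.choose (n - i) := by rw [← hv]
  rw [hm, Finset.mul_sum]
  refine Finset.sum_congr rfl fun j hj => ?_
  have hj' : j ≤ n := by simpa [Nat.lt_succ_iff] using hj
  rw [Nat.choose_symm hj']
  ring

theorem turan_aux_sum (n j : ℕ) (x : ℝ) (hx : |x| < 1) :
    HasSum (fun k : ℕ => ((k + n).choose (n + j) : ℝ) * x ^ k)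
      (x ^ j / (1 - x) ^ (n + j + 1)) := by
  have h := (hasSum_choose_mul_geometric_of_norm_lt_one (n + j) (r := x) hx).mul_left (x ^ j)
  rw [← (add_left_injective j).hasSum_iff]
  · convert! h using 1
    · funext m
      simp only [Function.comp]
      rw [show m + j + n = m + (n + j) by ring]
      ring
    · ring
  · intro k hk
    have : k < j := by
      by_contra hc
      exact hk ⟨k - j, by simp; omega⟩
    rw [Nat.choose_eq_zero_of_lt (by omega)]
    simp

theorem turan_derivative_evaluation (n : ℕ) (x : ℝ) (hx : |x| < 1) :
    -(1 / (n.factorial : ℝ)) *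
        iteratedDeriv n (fun z : ℝ => z ^ n / (z + x) ^ (n + 1)) (-1) =
      ∑' k : ℕ, ((n + k).choose k : ℝ) ^ 2 * x ^ k := by
  have h1 : -1 + x ≠ 0 := by linarith [(abs_lt.1 hx).2]
  have hn : (n.factorial : ℝ) ≠ 0 := by exact_mod_cast n.factorial_ne_zero
  have hcd (j : ℕ) : ContDiffAt ℝ n (fun z : ℝ => (z + x) ^ (-((j : ℤ) + 1))) (-1) := by
    have hz : (fun z : ℝ => (z + x) ^ (-((j : ℤ) + 1))) = fun z => ((z + x) ^ (j + 1))⁻¹ := by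
      funext z
      rw [zpow_neg]; norm_cast
    rw [hz]
    exact ContDiffAt.inv (by fun_prop) (pow_ne_zero _ h1)
  have hsum : HasSum (fun k : ℕ => ((n + k).choose k : ℝ) ^ 2 * x ^ k)
      (∑ j ∈ Finset.range (n + 1),
        ((n.choose j : ℝ) * ((n + j).choose n : ℝ)) * (x ^ j / (1 - x) ^ (n + j + 1))) := by
    have := hasSum_sum (s := Finset.range (n + 1)) fun j _ =>
      (turan_aux_sum n j x hx).mul_left ((n.choose j : ℝ) * ((n + j).choose n : ℝ))
    convert! this using 1
    funext k
    rw [← Nat.cast_pow, ← turan_aux_choose n k]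
    push_cast
    rw [Finset.sum_mul]
    exact Finset.sum_congr rfl fun j _ => by ring
  rw [hsum.tsum_eq, turan_aux_fun, iteratedDeriv_fun_sum fun j _ => contDiffAt_const.mul (hcd j),
    Finset.mul_sum]
  refine Finset.sum_congr rfl fun j _ => ?_
  rw [iteratedDeriv_const_mul_field, turan_aux_deriv n j x hx, neg_pow x j]
  have hs : ((-1 : ℝ) ^ j) * (-1) ^ j = 1 := by rw [← mul_pow]; simp
  have : -(1 / (n.factorial : ℝ)) * ((-1) ^ j * x ^ j * (n.choose j : ℝ) *
      ((-1) ^ (j + 1) * (n.factorial : ℝ) * ((n + j).choose n : ℝ) / (1 - x) ^ (n + j + 1))) =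
      ((-1) ^ j * (-1) ^ j) * ((n.factorial : ℝ) / n.factorial) *
      (((n.choose j : ℝ) * ((n + j).choose n : ℝ)) * (x ^ j / (1 - x) ^ (n + j + 1))) := by
    ring
  rw [this, hs, div_self hn]
  ring
end
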